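/- Let A and B be anticommuting Hermitian involutions on a finite-dimensional Hilbert space and ψ a unit vector. Then ⟨ψ|A|ψ⟩² + ⟨ψ|B|ψ⟩² ≤ 1. In particular, at least one of |⟨ψ|A|ψ⟩|, |⟨ψ|B|ψ⟩| is at most 1/√2. -/

import Mathlib

open Matrix

/-- Anticommuting Hermitian involutions: ⟨A⟩² + ⟨B⟩² ≤ 1, so one of the
expectation values has absolute value at most 1/√2. -/
theorem expectation_squares_le_one {n : ℕ} (A B : Matrix (Fin n) (Fin n) ℂ)
    (hA : A.IsHermitian) (hB : B.IsHermitian)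
    (hAB : A * B + B * A = 0) (hA2 : A * A = 1) (hB2 : B * B = 1)
    (ψ : Fin n → ℂ) (hψ : star ψ ⬝ᵥ ψ = 1) :
    (star ψ ⬝ᵥ A.mulVec ψ).re ^ 2 + (star ψ ⬝ᵥ B.mulVec ψ).re ^ 2 ≤ 1 ∧
    (|(star ψ ⬝ᵥ A.mulVec ψ).re| ≤ 1 / Real.sqrt 2 ∨
     |(star ψ ⬝ᵥ B.mulVec ψ).re| ≤ 1 / Real.sqrt 2) := by
  set a := (star ψ ⬝ᵥ A.mulVec ψ).re with ha
  set b := (star ψ ⬝ᵥ B.mulVec ψ).re with hb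
  have key : a ^ 2 + b ^ 2 ≤ 1 := by
    set s : ℝ := a ^ 2 + b ^ 2 with hs
    let M : Matrix (Fin n) (Fin n) ℂ := (a : ℂ) • A + (b : ℂ) • B - (s : ℂ) • 1
    have hMH : Mᴴ = M := by
      simp [M, conjTranspose_sub, conjTranspose_add, conjTranspose_smul, hA.eq, hB.eq]
    have hBA : B * A = - (A * B) := by
      rw [eq_neg_iff_add_eq_zero, add_comm]; exact hAB
    have hMM : Mᴴ * M = ((s + s ^ 2 : ℝ) : ℂ) • (1 : Matrix (Fin n) (Fin n) ℂ)
        - ((2 * s * a : ℝ) : ℂ) • A - ((2 * s * b : ℝ) : ℂ) • B := by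
      rw [hMH]
      simp only [M, sub_mul, mul_sub, add_mul, mul_add, smul_mul_assoc, mul_smul_comm,
        hA2, hB2, hBA, mul_one, one_mul]
      have : (s : ℂ) = a ^ 2 + b ^ 2 := by rw [hs]; push_cast; ring
      push_cast
      rw [this]
      module
    have h0 := open scoped ComplexOrder in (posSemidef_conjTranspose_mul_self M).dotProduct_mulVec_nonneg ψ
    rw [hMM] at h0
    simp only [sub_mulVec, smul_mulVec, one_mulVec, dotProduct_sub, dotProduct_smul, hψ] at h0
    have h1 := (Complex.le_def.1 h0).1
    simp only [smul_eq_mul, Complex.sub_re, Complex.re_ofReal_mul, Complex.zero_re,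
      Complex.one_re, ← ha, ← hb] at h1
    have h2 : 0 ≤ s * (1 - s) := by
      have : s * s = s * a * a + s * b * b := by rw [hs]; ring
      nlinarith
    by_contra hc
    push Not at hc
    nlinarith
  refine ⟨key, ?_⟩
  by_contra hc
  push Not at hc
  obtain ⟨h1, h2⟩ := hc
  have hp : (0 : ℝ) ≤ 1 / Real.sqrt 2 := by positivity
  have hq : (1 / Real.sqrt 2) ^ 2 = 1 / 2 := by
    rw [div_pow, Real.sq_sqrt (by norm_num)]; norm_num
  have h3 := pow_lt_pow_left₀ h1 hp two_ne_zero
  have h4 := pow_lt_pow_left₀ h2 hp two_ne_zero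
  rw [sq_abs, hq] at h3 h4
  linarith
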